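/- Let b_{ij} = ⟨A X_*(∂/∂x^i), X_*(∂/∂x^j)⟩ be the components of the pullback X*II of the second fundamental form of the Killing graph Σ to P. Then its covariant derivative in P is related to the covariant derivative of II on Σ by ∇_k b_{ij} = ∇^Σ_k a_{ij} + (W/γ) a_{ik} a_j^l u_l + (W/γ) a_{jk} a_i^l u_l + (u_i u_k/(2γ²)) a_{jl} γ^l + (u_j u_k/(2γ²)) a_{il} γ^l. -/

import Mathlib

/-!
Formalization of the setting of "Mean curvature flow of Killing graphs"
(Lira–Wanderley).  The integral leaf `P` of the distribution orthogonal to the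
Killing field `Y` is presented in coordinates as `ℝⁿ` (points `Fin n → ℝ`)
carrying a Riemannian metric `σ`; the ambient manifold is the warped product
`M = P ×_{1/√γ} ℝ` with coordinates `(x⁰ = s, x)` and metric
`ḡ = σ + (1/γ) ds²`, where `γ = 1/|Y|²` and `Y = ∂/∂x⁰`.  All geometric
quantities (Christoffel symbols, second fundamental form and mean curvature of
a Killing graph, ambient Ricci curvature, …) are defined concretely from this
data.
-/

noncomputable section

open Real MeasureTheory Filter Topology

namespace KMCF

variable {n : ℕ}

/-- Partial derivative of a function on the coordinate chart of the leaf `P`. -/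
def pd (f : (Fin n → ℝ) → ℝ) (i : Fin n) (x : Fin n → ℝ) : ℝ :=
  fderiv ℝ f x (Pi.single i 1)

/-- Component of an ambient tangent vector `(v⁰, vⁱ)` of `M = P ×_{1/√γ} ℝ`. -/
def vComp (v : ℝ × (Fin n → ℝ)) (a : Fin (n + 1)) : ℝ :=
  if ha : a = 0 then v.1 else v.2 (a.pred ha)

/-- Ambient partial derivative (nothing depends on the flow parameter `x⁰`). -/
def ambPd (f : (Fin n → ℝ) → ℝ) (a : Fin (n + 1)) (x : Fin n → ℝ) : ℝ :=
  if ha : a = 0 then 0 else pd f (a.pred ha) x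

/-- Coordinate tangent vectors `X_* ∂_i = ∂_i + u_i ∂_0` of the Killing graph
`X(x) = ϑ(u(x), x)`. -/
def tangentV (u : (Fin n → ℝ) → ℝ) (i : Fin n) (x : Fin n → ℝ) : ℝ × (Fin n → ℝ) :=
  (pd u i x, Pi.single i 1)

/-- Coordinate data of the integral leaf `P`: the metric `σ`, its inverse, and
the warping function `γ = 1/|Y|²` of the Killing field `Y`. -/
structure LeafData (n : ℕ) where
  σ : (Fin n → ℝ) → Fin n → Fin n → ℝ
  σInv : (Fin n → ℝ) → Fin n → Fin n → ℝ
  γ : (Fin n → ℝ) → ℝ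
  σ_symm : ∀ x i j, σ x i j = σ x j i
  σ_posdef : ∀ x (v : Fin n → ℝ), v ≠ 0 → 0 < ∑ i, ∑ j, σ x i j * v i * v j
  σInv_mul_σ : ∀ x i j, (∑ k, σInv x i k * σ x k j) = if i = j then (1 : ℝ) else 0
  σ_smooth : ∀ i j, ContDiff ℝ (⊤ : ℕ∞) fun x => σ x i j
  γ_pos : ∀ x, 0 < γ x
  γ_smooth : ContDiff ℝ (⊤ : ℕ∞) γ

namespace LeafData

variable (D : LeafData n)

/-- Christoffel symbols `Γ^k_{ij}` of the leaf metric `σ`. -/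
def Γc (x : Fin n → ℝ) (i j k : Fin n) : ℝ :=
  (1 / 2) * ∑ l, D.σInv x k l *
    (pd (fun y => D.σ y j l) i x + pd (fun y => D.σ y i l) j x -
      pd (fun y => D.σ y i j) l x)

/-- Covariant Hessian `f_{i;j}` in `P`. -/
def hess (f : (Fin n → ℝ) → ℝ) (i j : Fin n) (x : Fin n → ℝ) : ℝ :=
  pd (pd f j) i x - ∑ k, D.Γc x i j k * pd f k x

/-- Raised gradient components `f^i = σ^{ij} f_j`. -/
def gradUp (f : (Fin n → ℝ) → ℝ) (i : Fin n) (x : Fin n → ℝ) : ℝ :=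
  ∑ j, D.σInv x i j * pd f j x

/-- Inner product `⟨∇f, ∇g⟩` of gradients in `P`. -/
def inner2 (f g : (Fin n → ℝ) → ℝ) (x : Fin n → ℝ) : ℝ :=
  ∑ i, ∑ j, D.σInv x i j * pd f i x * pd g j x

/-- `|∇u|²`. -/
def gradSq (u : (Fin n → ℝ) → ℝ) (x : Fin n → ℝ) : ℝ := D.inner2 u u x

/-- `W = √(γ + |∇u|²)`. -/
def Wf (u : (Fin n → ℝ) → ℝ) (x : Fin n → ℝ) : ℝ :=
  Real.sqrt (D.γ x + D.gradSq u x)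

/-- Divergence in `P` of a vector field with raised components `Z^i`. -/
def divP (Z : Fin n → (Fin n → ℝ) → ℝ) (x : Fin n → ℝ) : ℝ :=
  ∑ i, (pd (Z i) i x + ∑ k, D.Γc x i k i * Z k x)

/-- Divergence in the ambient warped product `M = P ×_{1/√γ} ℝ` of an
`s`-independent horizontal vector field (`Γ̄⁰_{0i} = −γ_i/(2γ)`). -/
def divM (Z : Fin n → (Fin n → ℝ) → ℝ) (x : Fin n → ℝ) : ℝ :=
  D.divP Z x - ∑ i, (pd D.γ i x / (2 * D.γ x)) * Z i x

/-- The ambient warped-product metric `ḡ` of `M` in the coordinates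
`(x⁰ = s, x)`:  `ḡ₀₀ = 1/γ`, `ḡ₀ᵢ = 0`, `ḡᵢⱼ = σᵢⱼ`. -/
def ambG (x : Fin n → ℝ) (a b : Fin (n + 1)) : ℝ :=
  if ha : a = 0 then (if b = 0 then 1 / D.γ x else 0)
  else if hb : b = 0 then 0 else D.σ x (a.pred ha) (b.pred hb)

/-- The inverse ambient metric. -/
def ambGInv (x : Fin n → ℝ) (a b : Fin (n + 1)) : ℝ :=
  if ha : a = 0 then (if b = 0 then D.γ x else 0)
  else if hb : b = 0 then 0 else D.σInv x (a.pred ha) (b.pred hb)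

/-- Ambient Christoffel symbols `Γ̄^a_{bc}` of the warped-product metric. -/
def ambΓ (x : Fin n → ℝ) (a b c : Fin (n + 1)) : ℝ :=
  (1 / 2) * ∑ e, D.ambGInv x a e *
    (ambPd (fun y => D.ambG y b e) c x + ambPd (fun y => D.ambG y c e) b x -
      ambPd (fun y => D.ambG y b c) e x)

/-- Ambient curvature tensor `R̄^a_{bcd}`. -/
def ambRiem (x : Fin n → ℝ) (a b c d : Fin (n + 1)) : ℝ :=
  ambPd (fun y => D.ambΓ y a d b) c x - ambPd (fun y => D.ambΓ y a c b) d x +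
    (∑ e, D.ambΓ x a c e * D.ambΓ x e d b) -
    ∑ e, D.ambΓ x a d e * D.ambΓ x e c b

/-- Ambient Ricci curvature as a bilinear form on tangent vectors of `M`. -/
def Ric (x : Fin n → ℝ) (v w : ℝ × (Fin n → ℝ)) : ℝ :=
  ∑ b, ∑ c, (∑ a, D.ambRiem x a b a c) * vComp v b * vComp w c

/-- The ambient Riemannian inner product `⟨·,·⟩` at `x`. -/
def ambInner (x : Fin n → ℝ) (v w : ℝ × (Fin n → ℝ)) : ℝ :=
  ∑ a, ∑ b, D.ambG x a b * vComp v a * vComp w b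

/-- Ambient covariant derivative `∇̄_v Z` of an `s`-independent vector field
`Z` in the direction of the tangent vector `v` at `x`. -/
def ambCov (Z : (Fin n → ℝ) → ℝ × (Fin n → ℝ)) (v : ℝ × (Fin n → ℝ))
    (x : Fin n → ℝ) : ℝ × (Fin n → ℝ) :=
  ((∑ i, v.2 i * pd (fun y => (Z y).1) i x) +
      ∑ b, ∑ c, D.ambΓ x 0 b c * vComp v b * vComp (Z x) c,
    fun k =>
      (∑ i, v.2 i * pd (fun y => (Z y).2 k) i x) +
        ∑ b, ∑ c, D.ambΓ x k.succ b c * vComp v b * vComp (Z x) c)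

/-- The unit normal `N = (1/W)(γ Y − ϑ_* ∇u)` of the Killing graph. -/
def normalN (u : (Fin n → ℝ) → ℝ) (x : Fin n → ℝ) : ℝ × (Fin n → ℝ) :=
  (D.γ x / D.Wf u x, fun k => -D.gradUp u k x / D.Wf u x)

/-- Second fundamental form `a_{ij} = ⟨∇̄_{X_*∂_i} X_*∂_j, N⟩` of the graph. -/
def sff (u : (Fin n → ℝ) → ℝ) (i j : Fin n) (x : Fin n → ℝ) : ℝ :=
  D.ambInner x (D.ambCov (fun y => tangentV u j y) (tangentV u i x) x)
    (D.normalN u x)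

/-- Induced metric `g_{ij} = σ_{ij} + u_i u_j / γ` of the graph. -/
def gmet (u : (Fin n → ℝ) → ℝ) (x : Fin n → ℝ) (i j : Fin n) : ℝ :=
  D.σ x i j + pd u i x * pd u j x / D.γ x

/-- Inverse induced metric `g^{ij} = σ^{ij} − u^i u^j / W²`. -/
def gInv (u : (Fin n → ℝ) → ℝ) (x : Fin n → ℝ) (i j : Fin n) : ℝ :=
  D.σInv x i j - D.gradUp u i x * D.gradUp u j x / (D.Wf u x) ^ 2

/-- `n` times the mean curvature of the graph: `nH = g^{ij} a_{ij}`. -/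
def nH (u : (Fin n → ℝ) → ℝ) (x : Fin n → ℝ) : ℝ :=
  ∑ i, ∑ j, D.gInv u x i j * D.sff u i j x

/-- Christoffel symbols of the induced metric of the graph. -/
def Γg (u : (Fin n → ℝ) → ℝ) (x : Fin n → ℝ) (i j k : Fin n) : ℝ :=
  (1 / 2) * ∑ l, D.gInv u x k l *
    (pd (fun y => D.gmet u y j l) i x + pd (fun y => D.gmet u y i l) j x -
      pd (fun y => D.gmet u y i j) l x)

/-- Covariant derivative `∇_k T_{ij}` in `P` of a 2-tensor. -/
def covP2 (T : Fin n → Fin n → (Fin n → ℝ) → ℝ) (k i j : Fin n)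
    (x : Fin n → ℝ) : ℝ :=
  pd (T i j) k x - ∑ l, D.Γc x k i l * T l j x - ∑ l, D.Γc x k j l * T i l x

/-- Covariant derivative `∇^Σ_k T_{ij}` on the graph of a 2-tensor. -/
def covG2 (u : (Fin n → ℝ) → ℝ) (T : Fin n → Fin n → (Fin n → ℝ) → ℝ)
    (k i j : Fin n) (x : Fin n → ℝ) : ℝ :=
  pd (T i j) k x - ∑ l, D.Γg u x k i l * T l j x - ∑ l, D.Γg u x k j l * T i l x

/-- Components of the gradient on `Σ` of a function of `x`. -/
def gradG (u f : (Fin n → ℝ) → ℝ) (j : Fin n) (x : Fin n → ℝ) : ℝ :=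
  ∑ k, D.gInv u x j k * pd f k x

/-- Components, in the basis `X_*∂_i`, of the tangential projection `Y^T`
of the Killing field:  `Y^T = (u^i/W²) X_*∂_i`. -/
def YTc (u : (Fin n → ℝ) → ℝ) (i : Fin n) (x : Fin n → ℝ) : ℝ :=
  D.gradUp u i x / (D.Wf u x) ^ 2

/-- Squared norm `|A|²` of the second fundamental form. -/
def Anorm2 (u : (Fin n → ℝ) → ℝ) (x : Fin n → ℝ) : ℝ :=
  ∑ i, ∑ j, ∑ k, ∑ l,
    D.gInv u x i k * D.gInv u x j l * D.sff u i j x * D.sff u k l x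

/-- Mixed components `a_i^j = g^{jk} a_{ik}` of the Weingarten map. -/
def aMix (u : (Fin n → ℝ) → ℝ) (i j : Fin n) (x : Fin n → ℝ) : ℝ :=
  ∑ k, D.gInv u x j k * D.sff u i k x

/-- Raised spatial components `N^j = −u^j/W` of the unit normal. -/
def NupS (u : (Fin n → ℝ) → ℝ) (j : Fin n) (x : Fin n → ℝ) : ℝ :=
  -D.gradUp u j x / D.Wf u x

/-- The support-type function `θ = ⟨∇d, N⟩`. -/
def theta (u d : (Fin n → ℝ) → ℝ) (x : Fin n → ℝ) : ℝ :=
  D.ambInner x ((0 : ℝ), fun k => D.gradUp d k x) (D.normalN u x)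

/-- `κ = ⟨γ ∇̄_Y Y, ∇d⟩ = ⟨∇γ, ∇d⟩/(2γ)`. -/
def kappa (d : (Fin n → ℝ) → ℝ) (x : Fin n → ℝ) : ℝ :=
  D.inner2 D.γ d x / (2 * D.γ x)

/-- The Korevaar auxiliary function `h = 1 + α d − ϕ ⟨∇d, N⟩`. -/
def hKor (u d ϕ : (Fin n → ℝ) → ℝ) (α : ℝ) (x : Fin n → ℝ) : ℝ :=
  1 + α * d x - ϕ x * D.theta u d x

/-- `η = e^{Ku} h`. -/
def etaKor (u d ϕ : (Fin n → ℝ) → ℝ) (K α : ℝ) (x : Fin n → ℝ) : ℝ :=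
  Real.exp (K * u x) * D.hKor u d ϕ α x

/-- Riemannian integral over `Ω ⊆ P` (density `√(det σ)`). -/
def intP (Ω : Set (Fin n → ℝ)) (f : (Fin n → ℝ) → ℝ) : ℝ :=
  ∫ x in Ω, f x * Real.sqrt (Matrix.det (Matrix.of fun i j => D.σ x i j))

/-- The nonparametric mean curvature flow equation (23):
`u_t = (σ^{ij} − u^i u^j/W²) u_{i;j} − (1/(2γ) + 1/(2W²)) γ^i u_i − W𝓗`. -/
def SolvesFlowOn (Ω : Set (Fin n → ℝ)) (J : Set ℝ) (𝓗 : (Fin n → ℝ) → ℝ)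
    (u : (Fin n → ℝ) → ℝ → ℝ) : Prop :=
  ∀ x ∈ Ω, ∀ t ∈ J,
    deriv (u x) t =
      (∑ i, ∑ j, D.gInv (fun y => u y t) x i j * D.hess (fun y => u y t) i j x) -
        (1 / (2 * D.γ x) + 1 / (2 * (D.Wf (fun y => u y t) x) ^ 2)) *
          D.inner2 D.γ (fun y => u y t) x -
        D.Wf (fun y => u y t) x * 𝓗 x

/-- The divergence form (21) of the flow equation:
`u_t = W div(∇u/W) − W𝓗 − γ⟨∇̄_Y Y, ∇u⟩`. -/
def SolvesFlowDivOn (Ω : Set (Fin n → ℝ)) (J : Set ℝ) (𝓗 : (Fin n → ℝ) → ℝ)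
    (u : (Fin n → ℝ) → ℝ → ℝ) : Prop :=
  ∀ x ∈ Ω, ∀ t ∈ J,
    deriv (u x) t =
      D.Wf (fun y => u y t) x *
          D.divP (fun i y => D.gradUp (fun z => u z t) i y /
            D.Wf (fun z => u z t) y) x -
        D.Wf (fun y => u y t) x * 𝓗 x -
        D.γ x * (D.inner2 D.γ (fun y => u y t) x / (2 * (D.γ x) ^ 2))

/-- The Neumann condition `⟨N, ν⟩ = ϕ` on `∂Ω`. -/
def NeumannOn (Ω : Set (Fin n → ℝ)) (J : Set ℝ) (ν : (Fin n → ℝ) → Fin n → ℝ)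
    (ϕ : (Fin n → ℝ) → ℝ) (u : (Fin n → ℝ) → ℝ → ℝ) : Prop :=
  ∀ x ∈ frontier Ω, ∀ t ∈ J,
    D.ambInner x (D.normalN (fun y => u y t) x) ((0 : ℝ), ν x) = ϕ x

/-- The stationary prescribed mean curvature equation (5) with the prescribed
contact angle condition (6). -/
def SolvesStationary (Ω : Set (Fin n → ℝ)) (ν : (Fin n → ℝ) → Fin n → ℝ)
    (𝓗 ϕ : (Fin n → ℝ) → ℝ) (v : (Fin n → ℝ) → ℝ) : Prop :=
  (∀ x ∈ Ω,
      D.divP (fun i y => D.gradUp v i y / D.Wf v y) x -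
          D.γ x * (D.inner2 D.γ v x / (2 * (D.γ x) ^ 2 * D.Wf v x)) = 𝓗 x) ∧
    ∀ x ∈ frontier Ω, D.ambInner x (D.normalN v x) ((0 : ℝ), ν x) = ϕ x

/-- The translating-soliton equation (41) with Neumann condition (42). -/
def SolvesSoliton (Ω : Set (Fin n → ℝ)) (ν : (Fin n → ℝ) → Fin n → ℝ)
    (𝓗 ϕ : (Fin n → ℝ) → ℝ) (C : ℝ) (v : (Fin n → ℝ) → ℝ) : Prop :=
  (∀ x ∈ Ω,
      D.divP (fun i y => D.gradUp v i y / D.Wf v y) x -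
          D.γ x * (D.inner2 D.γ v x / (2 * (D.γ x) ^ 2 * D.Wf v x)) =
        𝓗 x + C / D.Wf v x) ∧
    ∀ x ∈ frontier Ω, D.ambInner x (D.normalN v x) ((0 : ℝ), ν x) = ϕ x

end LeafData

end KMCF

namespace KMCF

open LeafData

/-!
An ambient vector `v` at a point of the graph is determined by its horizontal part `v.2` and its
normal component, through `v = X_*(v.2) + W⟨v, N⟩ Y`.  Applied to `∇̄_{X_*∂_i} X_*∂_j` this gives
`∇̄_{X_*∂_i} X_*∂_j = X_*∇_{∂_i}∂_j + W a_{ij} Y + (u_i u_j/(2γ²)) X_*∇γ`.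
By the Gauss formula the tangential part of the left-hand side is `∇^Σ_{∂_i}∂_j`, and the tangential
part of `Y` is `u^k/W²`, so the Christoffel symbols of `Σ` and `P` differ by
`W a_{ij} u^k/W² + (u_i u_j/(2γ²)) γ^k`.  The theorem contracts this difference with `II`, using
`a_j^l u_l = γ a_{jl} u^l/W²`.
-/

section PartialDerivatives

variable {n : ℕ} {f g : (Fin n → ℝ) → ℝ} {x : Fin n → ℝ}

lemma pd_const (c : ℝ) (i : Fin n) (x : Fin n → ℝ) : pd (fun _ => c) i x = 0 := by
  simp [pd]

lemma pd_add (hf : DifferentiableAt ℝ f x) (hg : DifferentiableAt ℝ g x) (i : Fin n) :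
    pd (fun y => f y + g y) i x = pd f i x + pd g i x := by
  simp [pd, fderiv_fun_add hf hg]

lemma pd_mul (hf : DifferentiableAt ℝ f x) (hg : DifferentiableAt ℝ g x) (i : Fin n) :
    pd (fun y => f y * g y) i x = f x * pd g i x + g x * pd f i x := by
  simp [pd, fderiv_fun_mul hf hg]

lemma pd_inv (hf : DifferentiableAt ℝ f x) (hx : f x ≠ 0) (i : Fin n) :
    pd (fun y => (f y)⁻¹) i x = -pd f i x / f x ^ 2 := by
  have h := (hasDerivAt_inv hx).comp_hasFDerivAt x hf.hasFDerivAt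
  have hinv : (fun y => (f y)⁻¹) = Inv.inv ∘ f := rfl
  rw [pd, hinv, h.fderiv]
  simp only [smul_apply, smul_eq_mul, pd]
  ring

lemma fderiv_apply_eq_sum_pd (f : (Fin n → ℝ) → ℝ) (x v : Fin n → ℝ) :
    fderiv ℝ f x v = ∑ i, v i * pd f i x := by
  conv_lhs => rw [pi_eq_sum_univ' v]
  simp [pd, map_sum]

lemma differentiableAt_fderiv (hf : ContDiffAt ℝ 2 f x) : DifferentiableAt ℝ (fderiv ℝ f) x :=
  (hf.fderiv_right (m := 1) (by norm_num)).differentiableAt (by norm_num)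

lemma differentiableAt_pd (hf : ContDiffAt ℝ 2 f x) (i : Fin n) : DifferentiableAt ℝ (pd f i) x :=
  (differentiableAt_fderiv hf).clm_apply (differentiableAt_const _)

lemma pd_pd_eq_fderiv_fderiv (hf : ContDiffAt ℝ 2 f x) (i j : Fin n) :
    pd (pd f j) i x = fderiv ℝ (fderiv ℝ f) x (Pi.single i 1) (Pi.single j 1) := by
  change fderiv ℝ (fun y => fderiv ℝ f y (Pi.single j 1)) x (Pi.single i 1) = _
  simp [fderiv_clm_apply (differentiableAt_fderiv hf) (differentiableAt_const _)]

lemma pd_pd_comm (hf : ContDiffAt ℝ 2 f x) (i j : Fin n) : pd (pd f j) i x = pd (pd f i) j x := by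
  rw [pd_pd_eq_fderiv_fderiv hf, pd_pd_eq_fderiv_fderiv hf]
  exact hf.isSymmSndFDerivAt (by simp) _ _

end PartialDerivatives

section AmbientComponents

variable {n : ℕ}

@[simp]
lemma vComp_zero (v : ℝ × (Fin n → ℝ)) : vComp v 0 = v.1 := by simp [vComp]

@[simp]
lemma vComp_succ (v : ℝ × (Fin n → ℝ)) (i : Fin n) : vComp v i.succ = v.2 i := by simp [vComp]

@[simp]
lemma ambPd_zero (f : (Fin n → ℝ) → ℝ) (x : Fin n → ℝ) : ambPd f 0 x = 0 := by simp [ambPd]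

@[simp]
lemma ambPd_succ (f : (Fin n → ℝ) → ℝ) (i : Fin n) (x : Fin n → ℝ) :
    ambPd f i.succ x = pd f i x := by simp [ambPd]

end AmbientComponents

/-- The Killing field `Y = ∂/∂x⁰` of the ambient warped product. -/
def killingField (n : ℕ) : ℝ × (Fin n → ℝ) := (1, 0)

/-- The differential `X_* v = (du(v), v)` at `x` of the graph parametrization
`X(x) = ϑ(u(x), x)`. -/
def graphPush {n : ℕ} (u : (Fin n → ℝ) → ℝ) (x : Fin n → ℝ) :
    (Fin n → ℝ) →L[ℝ] ℝ × (Fin n → ℝ) :=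
  (fderiv ℝ u x).prod (ContinuousLinearMap.id ℝ _)

namespace LeafData

variable {n : ℕ} (D : LeafData n)

section LeafMetric

variable (x : Fin n → ℝ)

lemma σInv_mul_σ_eq_one : Matrix.of (D.σInv x) * Matrix.of (D.σ x) = 1 := by
  ext i j
  simp [Matrix.mul_apply, D.σInv_mul_σ, Matrix.one_apply]

lemma sum_σ_mul_σInv (i j : Fin n) :
    ∑ k, D.σ x i k * D.σInv x k j = if i = j then (1 : ℝ) else 0 := by
  have h : Matrix.of (D.σ x) * Matrix.of (D.σInv x) = 1 :=
    mul_eq_one_comm.mp (D.σInv_mul_σ_eq_one x)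
  simpa [Matrix.mul_apply, Matrix.one_apply] using congrArg (fun A => A i j) h

lemma σInv_comm (i j : Fin n) : D.σInv x i j = D.σInv x j i := by
  have hσ : (Matrix.of (D.σ x)).IsSymm := Matrix.IsSymm.ext fun i j => D.σ_symm x j i
  have hσInv := hσ.inv
  rw [Matrix.inv_eq_left_inv (D.σInv_mul_σ_eq_one x)] at hσInv
  exact hσInv.apply j i

lemma sum_σ_mul_sum_σInv (w : Fin n → ℝ) (i : Fin n) :
    ∑ k, D.σ x i k * ∑ l, D.σInv x k l * w l = w i := by
  simp only [Finset.mul_sum, ← mul_assoc]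
  rw [Finset.sum_comm]
  simp [← Finset.sum_mul, sum_σ_mul_σInv]

lemma sum_σ_mul_gradUp (f : (Fin n → ℝ) → ℝ) (i : Fin n) :
    ∑ k, D.σ x i k * D.gradUp f k x = pd f i x :=
  D.sum_σ_mul_sum_σInv x (fun l => pd f l x) i

lemma sum_σ_mul_Γc (i j l : Fin n) :
    ∑ k, D.σ x l k * D.Γc x i j k =
      (1 / 2) * (pd (fun y => D.σ y j l) i x + pd (fun y => D.σ y i l) j x -
        pd (fun y => D.σ y i j) l x) := by
  simp only [Γc, mul_left_comm _ (1 / 2 : ℝ), ← Finset.mul_sum]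
  rw [D.sum_σ_mul_sum_σInv x
    (fun l => pd (fun y => D.σ y j l) i x + pd (fun y => D.σ y i l) j x -
      pd (fun y => D.σ y i j) l x)]

lemma Γc_comm (i j k : Fin n) : D.Γc x i j k = D.Γc x j i k := by
  simp only [Γc, D.σ_symm _ i j, add_comm (pd (fun y => D.σ y j _) i x)]

lemma gradSq_eq_sum_gradUp_mul_pd (u : (Fin n → ℝ) → ℝ) :
    D.gradSq u x = ∑ i, D.gradUp u i x * pd u i x := by
  simp only [gradSq, inner2, gradUp, Finset.sum_mul]
  refine Finset.sum_congr rfl fun i _ => Finset.sum_congr rfl fun j _ => ?_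
  ring

lemma gradSq_nonneg (u : (Fin n → ℝ) → ℝ) : 0 ≤ D.gradSq u x := by
  have hquad : D.gradSq u x = ∑ i, ∑ j, D.σ x i j * D.gradUp u i x * D.gradUp u j x := by
    rw [gradSq_eq_sum_gradUp_mul_pd]
    refine Finset.sum_congr rfl fun i _ => ?_
    rw [← sum_σ_mul_gradUp, Finset.mul_sum]
    exact Finset.sum_congr rfl fun j _ => by ring
  rcases eq_or_ne (fun i => D.gradUp u i x) 0 with hzero | hne
  · simp [hquad, fun i => congrFun hzero i]
  · exact hquad ▸ (D.σ_posdef x _ hne).le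

lemma Wf_pos (u : (Fin n → ℝ) → ℝ) : 0 < D.Wf u x :=
  Real.sqrt_pos.mpr (add_pos_of_pos_of_nonneg (D.γ_pos x) (D.gradSq_nonneg x u))

lemma Wf_sq (u : (Fin n → ℝ) → ℝ) : D.Wf u x ^ 2 = D.γ x + D.gradSq u x :=
  Real.sq_sqrt (add_nonneg (D.γ_pos x).le (D.gradSq_nonneg x u))

lemma differentiableAt_γ : DifferentiableAt ℝ D.γ x :=
  D.γ_smooth.differentiable (by simp) x

lemma pd_inv_γ (i : Fin n) : pd (fun y => (D.γ y)⁻¹) i x = -pd D.γ i x / D.γ x ^ 2 :=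
  pd_inv (D.differentiableAt_γ x) (D.γ_pos x).ne' i

end LeafMetric

section AmbientConnection

variable (x : Fin n → ℝ)

@[simp]
lemma ambG_zero_zero : D.ambG x 0 0 = (D.γ x)⁻¹ := by simp [ambG]

@[simp]
lemma ambG_zero_succ (i : Fin n) : D.ambG x 0 i.succ = 0 := by simp [ambG]

@[simp]
lemma ambG_succ_zero (i : Fin n) : D.ambG x i.succ 0 = 0 := by simp [ambG]

@[simp]
lemma ambG_succ_succ (i j : Fin n) : D.ambG x i.succ j.succ = D.σ x i j := by simp [ambG]

@[simp]
lemma ambGInv_zero_zero : D.ambGInv x 0 0 = D.γ x := by simp [ambGInv]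

@[simp]
lemma ambGInv_zero_succ (i : Fin n) : D.ambGInv x 0 i.succ = 0 := by simp [ambGInv]

@[simp]
lemma ambGInv_succ_zero (i : Fin n) : D.ambGInv x i.succ 0 = 0 := by simp [ambGInv]

@[simp]
lemma ambGInv_succ_succ (i j : Fin n) : D.ambGInv x i.succ j.succ = D.σInv x i j := by
  simp [ambGInv]

lemma ambΓ_zero_zero_zero : D.ambΓ x 0 0 0 = 0 := by
  simp [ambΓ, Fin.sum_univ_succ]

lemma ambΓ_zero_zero_succ (i : Fin n) : D.ambΓ x 0 0 i.succ = -pd D.γ i x / (2 * D.γ x) := by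
  have hγ := (D.γ_pos x).ne'
  simp only [ambΓ, Fin.sum_univ_succ, ambGInv_zero_zero, ambGInv_zero_succ, ambPd_zero, ambPd_succ,
    ambG_zero_zero, ambG_zero_succ, pd_const, pd_inv_γ, zero_mul, Finset.sum_const_zero, add_zero,
    sub_zero]
  field_simp

lemma ambΓ_zero_succ_zero (i : Fin n) : D.ambΓ x 0 i.succ 0 = -pd D.γ i x / (2 * D.γ x) := by
  have hγ := (D.γ_pos x).ne'
  simp only [ambΓ, Fin.sum_univ_succ, ambGInv_zero_zero, ambGInv_zero_succ, ambPd_zero, ambPd_succ,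
    ambG_zero_zero, ambG_zero_succ, ambG_succ_zero, pd_const, pd_inv_γ, zero_mul,
    Finset.sum_const_zero, add_zero, zero_add, sub_zero]
  field_simp

lemma ambΓ_zero_succ_succ (i j : Fin n) : D.ambΓ x 0 i.succ j.succ = 0 := by
  simp [ambΓ, Fin.sum_univ_succ, pd_const]

lemma ambΓ_succ_zero_zero (k : Fin n) :
    D.ambΓ x k.succ 0 0 = D.gradUp D.γ k x / (2 * D.γ x ^ 2) := by
  simp only [ambΓ, Fin.sum_univ_succ, ambGInv_succ_zero, ambGInv_succ_succ, ambPd_zero, ambPd_succ,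
    ambG_zero_zero, pd_inv_γ, gradUp, Finset.sum_div, zero_mul, zero_add,
    Finset.mul_sum]
  refine Finset.sum_congr rfl fun l _ => ?_
  ring

lemma ambΓ_succ_zero_succ (k i : Fin n) : D.ambΓ x k.succ 0 i.succ = 0 := by
  simp [ambΓ, Fin.sum_univ_succ, pd_const]

lemma ambΓ_succ_succ_zero (k i : Fin n) : D.ambΓ x k.succ i.succ 0 = 0 := by
  simp [ambΓ, Fin.sum_univ_succ, pd_const]

lemma ambΓ_succ_succ_succ (k i j : Fin n) : D.ambΓ x k.succ i.succ j.succ = D.Γc x i j k := by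
  rw [Γc_comm]
  simp [ambΓ, Γc, Fin.sum_univ_succ, D.σ_symm _ j i]

lemma ambCov_fst (Z : (Fin n → ℝ) → ℝ × (Fin n → ℝ)) (v : ℝ × (Fin n → ℝ)) :
    (D.ambCov Z v x).1 =
      ∑ i, v.2 i * pd (fun y => (Z y).1) i x -
        (∑ i, pd D.γ i x * (v.1 * (Z x).2 i + v.2 i * (Z x).1)) / (2 * D.γ x) := by
  simp only [ambCov, Fin.sum_univ_succ, vComp_zero, vComp_succ, ambΓ_zero_zero_zero,
    ambΓ_zero_zero_succ, ambΓ_zero_succ_zero, ambΓ_zero_succ_succ, zero_mul, zero_add, add_zero,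
    Finset.sum_const_zero, Finset.sum_div, sub_eq_add_neg, ← Finset.sum_neg_distrib,
    ← Finset.sum_add_distrib]
  refine Finset.sum_congr rfl fun i _ => ?_
  ring

lemma ambCov_snd (Z : (Fin n → ℝ) → ℝ × (Fin n → ℝ)) (v : ℝ × (Fin n → ℝ)) (k : Fin n) :
    (D.ambCov Z v x).2 k =
      ∑ i, v.2 i * pd (fun y => (Z y).2 k) i x +
        (v.1 * (Z x).1 / (2 * D.γ x ^ 2) * D.gradUp D.γ k x +
          ∑ i, ∑ j, D.Γc x i j k * v.2 i * (Z x).2 j) := by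
  simp only [ambCov, Fin.sum_univ_succ, vComp_zero, vComp_succ, ambΓ_succ_zero_zero,
    ambΓ_succ_zero_succ, ambΓ_succ_succ_zero, ambΓ_succ_succ_succ, zero_mul, zero_add, add_zero,
    Finset.sum_const_zero]
  ring

lemma ambInner_eq_add_sum (v w : ℝ × (Fin n → ℝ)) :
    D.ambInner x v w = v.1 * w.1 / D.γ x + ∑ i, v.2 i * ∑ j, D.σ x i j * w.2 j := by
  simp only [ambInner, Fin.sum_univ_succ, vComp_zero, vComp_succ, ambG_zero_zero, ambG_zero_succ,
    ambG_succ_zero, ambG_succ_succ, zero_mul, zero_add, add_zero, Finset.sum_const_zero,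
    Finset.mul_sum]
  congr 1
  · ring
  · exact Finset.sum_congr rfl fun i _ => Finset.sum_congr rfl fun j _ => by ring

lemma ambInner_add_left (v v' w : ℝ × (Fin n → ℝ)) :
    D.ambInner x (v + v') w = D.ambInner x v w + D.ambInner x v' w := by
  simp only [ambInner_eq_add_sum, Prod.fst_add, Prod.snd_add, Pi.add_apply, add_mul,
    Finset.sum_add_distrib]
  ring

lemma ambInner_smul_left (c : ℝ) (v w : ℝ × (Fin n → ℝ)) :
    D.ambInner x (c • v) w = c * D.ambInner x v w := by
  simp only [ambInner_eq_add_sum, Prod.smul_fst, Prod.smul_snd, Pi.smul_apply, smul_eq_mul,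
    mul_assoc, ← Finset.mul_sum]
  ring

end AmbientConnection

section Graph

variable (u : (Fin n → ℝ) → ℝ) (x : Fin n → ℝ)

lemma ambInner_tangentV (v : ℝ × (Fin n → ℝ)) (l : Fin n) :
    D.ambInner x v (tangentV u l x) = v.1 * pd u l x / D.γ x + ∑ k, D.σ x l k * v.2 k := by
  simp [ambInner_eq_add_sum, tangentV, Pi.single_apply, D.σ_symm x l, mul_comm]

lemma Wf_mul_ambInner_normalN (v : ℝ × (Fin n → ℝ)) :
    D.Wf u x * D.ambInner x v (D.normalN u x) = v.1 - fderiv ℝ u x v.2 := by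
  have hγ := (D.γ_pos x).ne'
  have hW := (D.Wf_pos x u).ne'
  have hlower (i : Fin n) :
      ∑ j, D.σ x i j * (-D.gradUp u j x / D.Wf u x) = -pd u i x / D.Wf u x := by
    rw [← sum_σ_mul_gradUp, ← Finset.sum_neg_distrib, Finset.sum_div]
    exact Finset.sum_congr rfl fun j _ => by ring
  simp only [ambInner_eq_add_sum, normalN, hlower, fderiv_apply_eq_sum_pd]
  simp only [mul_div_assoc', mul_neg, ← Finset.sum_div, Finset.sum_neg_distrib]
  field_simp
  ring

lemma eq_graphPush_add_smul_killingField (v : ℝ × (Fin n → ℝ)) :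
    v = graphPush u x v.2 +
      (D.Wf u x * D.ambInner x v (D.normalN u x)) • killingField n := by
  ext <;> simp [Wf_mul_ambInner_normalN, graphPush, killingField]

lemma ambCov_tangentV_fst (i j : Fin n) :
    (D.ambCov (tangentV u j) (tangentV u i x) x).1 =
      pd (pd u j) i x - (pd D.γ i x * pd u j x + pd D.γ j x * pd u i x) / (2 * D.γ x) := by
  simp [ambCov_fst, tangentV, Pi.single_apply, mul_add, Finset.sum_add_distrib, add_comm]

lemma ambCov_tangentV_snd (i j : Fin n) :
    (D.ambCov (tangentV u j) (tangentV u i x) x).2 =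
      D.Γc x i j + (pd u i x * pd u j x / (2 * D.γ x ^ 2)) • fun k => D.gradUp D.γ k x := by
  ext k
  simp [ambCov_snd, tangentV, Pi.single_apply, pd_const, add_comm]

lemma ambCov_tangentV (i j : Fin n) :
    D.ambCov (tangentV u j) (tangentV u i x) x =
      graphPush u x (D.Γc x i j) + (D.Wf u x * D.sff u i j x) • killingField n +
        (pd u i x * pd u j x / (2 * D.γ x ^ 2)) • graphPush u x fun k => D.gradUp D.γ k x := by
  rw [D.eq_graphPush_add_smul_killingField u x (D.ambCov _ _ x), ambCov_tangentV_snd, map_add,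
    map_smul, sff]
  abel

variable {u x}

lemma ambCov_tangentV_comm (hu : ContDiffAt ℝ 2 u x) (i j : Fin n) :
    D.ambCov (tangentV u j) (tangentV u i x) x = D.ambCov (tangentV u i) (tangentV u j x) x := by
  refine Prod.ext ?_ ?_
  · rw [ambCov_tangentV_fst, ambCov_tangentV_fst, pd_pd_comm hu, add_comm (pd D.γ i x * _)]
  · rw [ambCov_tangentV_snd, ambCov_tangentV_snd, funext (D.Γc_comm x i j), mul_comm (pd u i x)]

lemma sff_comm (hu : ContDiffAt ℝ 2 u x) (i j : Fin n) : D.sff u i j x = D.sff u j i x :=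
  congrArg (D.ambInner x · (D.normalN u x)) (D.ambCov_tangentV_comm hu i j)

lemma pd_gmet (hu : ContDiffAt ℝ 2 u x) (i j k : Fin n) :
    pd (fun y => D.gmet u y i j) k x =
      pd (fun y => D.σ y i j) k x +
        (pd (pd u i) k x * pd u j x + pd u i x * pd (pd u j) k x) / D.γ x -
        pd u i x * pd u j x * pd D.γ k x / D.γ x ^ 2 := by
  have hγ := D.differentiableAt_γ x
  have hσ : DifferentiableAt ℝ (fun y => D.σ y i j) x :=
    (D.σ_smooth i j).differentiable (by simp) x
  have hui := differentiableAt_pd hu i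
  have huj := differentiableAt_pd hu j
  have hγInv : DifferentiableAt ℝ (fun y => (D.γ y)⁻¹) x := hγ.fun_inv (D.γ_pos x).ne'
  simp only [gmet, div_eq_mul_inv]
  rw [pd_add hσ ((hui.fun_mul huj).fun_mul hγInv), pd_mul (hui.fun_mul huj) hγInv, pd_mul hui huj,
    pd_inv_γ]
  ring

lemma ambInner_ambCov_tangentV_tangentV (hu : ContDiffAt ℝ 2 u x) (i j l : Fin n) :
    D.ambInner x (D.ambCov (tangentV u j) (tangentV u i x) x) (tangentV u l x) =
      (1 / 2) * (pd (fun y => D.gmet u y j l) i x + pd (fun y => D.gmet u y i l) j x -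
        pd (fun y => D.gmet u y i j) l x) := by
  have hγ := (D.γ_pos x).ne'
  simp only [ambInner_tangentV, ambCov_tangentV_fst, ambCov_tangentV_snd, Pi.add_apply,
    Pi.smul_apply, smul_eq_mul, mul_add, mul_left_comm (D.σ x l _), Finset.sum_add_distrib,
    ← Finset.mul_sum, sum_σ_mul_gradUp, sum_σ_mul_Γc, D.pd_gmet hu]
  rw [pd_pd_comm hu j i, pd_pd_comm hu l i, pd_pd_comm hu l j]
  field_simp
  ring

variable (u x)

lemma sum_gInv_mul (w : Fin n → ℝ) (k : Fin n) :
    ∑ l, D.gInv u x k l * w l =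
      ∑ l, D.σInv x k l * w l - D.YTc u k x * ∑ l, D.gradUp u l x * w l := by
  rw [Finset.mul_sum, ← Finset.sum_sub_distrib]
  exact Finset.sum_congr rfl fun l _ => by rw [gInv, YTc]; ring

lemma sum_gInv_mul_pd (k : Fin n) :
    ∑ l, D.gInv u x k l * pd u l x = D.γ x * D.YTc u k x := by
  have hW := (D.Wf_pos x u).ne'
  have hraise : D.gradUp u k x = D.YTc u k x * D.Wf u x ^ 2 := by rw [YTc]; field_simp
  rw [sum_gInv_mul, ← gradUp, ← gradSq_eq_sum_gradUp_mul_pd, hraise, Wf_sq]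
  ring

lemma gInv_comm (i j : Fin n) : D.gInv u x i j = D.gInv u x j i := by
  rw [gInv, gInv, σInv_comm, mul_comm (D.gradUp u i x)]

lemma sum_gInv_mul_gmet (k m : Fin n) :
    ∑ l, D.gInv u x k l * D.gmet u x l m = if k = m then (1 : ℝ) else 0 := by
  have hγ := (D.γ_pos x).ne'
  have hσ : ∑ l, D.gInv u x k l * D.σ x l m =
      (if k = m then (1 : ℝ) else 0) - D.YTc u k x * pd u m x := by
    rw [D.sum_gInv_mul u x (D.σ x · m), D.σInv_mul_σ, ← D.sum_σ_mul_gradUp]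
    simp only [D.σ_symm x _ m, mul_comm]
  simp only [gmet, mul_add, Finset.sum_add_distrib, hσ, mul_div_assoc, ← mul_assoc,
    ← Finset.sum_mul, sum_gInv_mul_pd]
  field_simp
  ring

/-- The components, in the basis `X_*∂_k`, of the tangential part of an ambient vector on the
graph, i.e. `k ↦ g^{kl}⟨v, X_*∂_l⟩`. -/
def tangentialPart : (ℝ × (Fin n → ℝ)) →ₗ[ℝ] (Fin n → ℝ) where
  toFun v k := ∑ l, D.gInv u x k l * D.ambInner x v (tangentV u l x)
  map_add' v w := by
    ext k
    simp [ambInner_add_left, mul_add, Finset.sum_add_distrib]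
  map_smul' c v := by
    ext k
    simp [ambInner_smul_left, Finset.mul_sum, mul_left_comm]

lemma tangentialPart_killingField (k : Fin n) :
    D.tangentialPart u x (killingField n) k = D.YTc u k x := by
  have hγ := (D.γ_pos x).ne'
  simp only [tangentialPart, killingField, LinearMap.coe_mk, AddHom.coe_mk, ambInner_tangentV,
    Pi.zero_apply, mul_zero, Finset.sum_const_zero, add_zero, one_mul, mul_div_assoc',
    ← Finset.sum_div, sum_gInv_mul_pd]
  field_simp

lemma ambInner_graphPush_tangentV (v : Fin n → ℝ) (l : Fin n) :
    D.ambInner x (graphPush u x v) (tangentV u l x) = ∑ m, D.gmet u x l m * v m := by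
  simp only [ambInner_tangentV, graphPush, ContinuousLinearMap.prod_apply, fderiv_apply_eq_sum_pd,
    ContinuousLinearMap.id_apply, gmet, add_mul, Finset.sum_add_distrib, Finset.sum_mul,
    Finset.sum_div]
  rw [add_comm]
  congr 1
  exact Finset.sum_congr rfl fun m _ => by ring

lemma tangentialPart_graphPush (v : Fin n → ℝ) : D.tangentialPart u x (graphPush u x v) = v := by
  ext k
  simp only [tangentialPart, LinearMap.coe_mk, AddHom.coe_mk, ambInner_graphPush_tangentV,
    Finset.mul_sum, ← mul_assoc]
  rw [Finset.sum_comm]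
  simp [← Finset.sum_mul, sum_gInv_mul_gmet]

variable {u x}

lemma Γg_eq_tangentialPart_ambCov (hu : ContDiffAt ℝ 2 u x) (i j k : Fin n) :
    D.Γg u x i j k = D.tangentialPart u x (D.ambCov (tangentV u j) (tangentV u i x) x) k := by
  simp only [Γg, tangentialPart, LinearMap.coe_mk, AddHom.coe_mk,
    D.ambInner_ambCov_tangentV_tangentV hu, Finset.mul_sum, mul_left_comm]

lemma Γg_eq_Γc_add (hu : ContDiffAt ℝ 2 u x) (i j k : Fin n) :
    D.Γg u x i j k =
      D.Γc x i j k + D.Wf u x * D.sff u i j x * D.YTc u k x +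
        pd u i x * pd u j x / (2 * D.γ x ^ 2) * D.gradUp D.γ k x := by
  rw [D.Γg_eq_tangentialPart_ambCov hu, ambCov_tangentV]
  simp [tangentialPart_graphPush, tangentialPart_killingField]

lemma sum_Γg_mul (hu : ContDiffAt ℝ 2 u x) (w : Fin n → ℝ) (i j : Fin n) :
    ∑ l, D.Γg u x i j l * w l =
      ∑ l, D.Γc x i j l * w l + D.Wf u x * D.sff u i j x * ∑ l, w l * D.YTc u l x +
        pd u i x * pd u j x / (2 * D.γ x ^ 2) * ∑ l, w l * D.gradUp D.γ l x := by
  simp only [D.Γg_eq_Γc_add hu, Finset.mul_sum, ← Finset.sum_add_distrib]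
  exact Finset.sum_congr rfl fun l _ => by ring

lemma covP2_eq_covG2_add (hu : ContDiffAt ℝ 2 u x) (T : Fin n → Fin n → (Fin n → ℝ) → ℝ)
    (k i j : Fin n) :
    D.covP2 T k i j x =
      D.covG2 u T k i j x +
        D.Wf u x * D.sff u k i x * (∑ l, T l j x * D.YTc u l x) +
        D.Wf u x * D.sff u k j x * (∑ l, T i l x * D.YTc u l x) +
        pd u k x * pd u i x / (2 * D.γ x ^ 2) * (∑ l, T l j x * D.gradUp D.γ l x) +
        pd u k x * pd u j x / (2 * D.γ x ^ 2) * (∑ l, T i l x * D.gradUp D.γ l x) := by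
  rw [covP2, covG2, D.sum_Γg_mul hu (T · j x), D.sum_Γg_mul hu (T i · x)]
  ring

variable (u x)

lemma sum_aMix_mul_pd (j : Fin n) :
    ∑ l, D.aMix u j l x * pd u l x = D.γ x * ∑ l, D.sff u j l x * D.YTc u l x := by
  simp only [aMix, Finset.sum_mul, Finset.mul_sum, mul_left_comm (D.γ x), ← sum_gInv_mul_pd]
  rw [Finset.sum_comm]
  refine Finset.sum_congr rfl fun m _ => Finset.sum_congr rfl fun l _ => ?_
  rw [gInv_comm]
  ring

end Graph

end LeafData

theorem covariant_derivative_of_pullback_second_fundamental_form_general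
    {n : ℕ} (D : LeafData n) {u : (Fin n → ℝ) → ℝ} {x : Fin n → ℝ} (hu : ContDiffAt ℝ 3 u x)
    (i j k : Fin n) :
    D.covP2 (D.sff u) k i j x =
      D.covG2 u (D.sff u) k i j x +
        D.Wf u x / D.γ x * D.sff u i k x * (∑ l, D.aMix u j l x * pd u l x) +
        D.Wf u x / D.γ x * D.sff u j k x * (∑ l, D.aMix u i l x * pd u l x) +
        pd u i x * pd u k x / (2 * D.γ x ^ 2) * (∑ l, D.sff u j l x * D.gradUp D.γ l x) +
        pd u j x * pd u k x / (2 * D.γ x ^ 2) * (∑ l, D.sff u i l x * D.gradUp D.γ l x) := by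
  have hu₂ : ContDiffAt ℝ 2 u x := hu.of_le (by norm_num)
  have hγ := (D.γ_pos x).ne'
  rw [D.covP2_eq_covG2_add hu₂, sum_aMix_mul_pd, sum_aMix_mul_pd]
  simp only [fun l => D.sff_comm hu₂ l j, D.sff_comm hu₂ k i]
  field_simp

/-- **formula (55).** Let `b_{ij} = ⟨A X_*∂_i, X_*∂_j⟩` be the
components of the pullback `X*II` of the second fundamental form of the
Killing graph `Σ` to `P`.  Then its covariant derivative in `P` is related to
the covariant derivative of `II` on `Σ` by
`∇_k b_{ij} = ∇^Σ_k a_{ij} + (W/γ) a_{ik} a_j^l u_l + (W/γ) a_{jk} a_i^l u_l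
  + (u_i u_k/(2γ²)) a_{jl} γ^l + (u_j u_k/(2γ²)) a_{il} γ^l`. -/
theorem covariant_derivative_of_pullback_second_fundamental_form
    {n : ℕ} (D : LeafData n) (Ω : Set (Fin n → ℝ))
    (hΩo : IsOpen Ω) (hΩb : Bornology.IsBounded Ω)
    (u : (Fin n → ℝ) → ℝ) (hu : ContDiff ℝ (⊤ : ℕ∞) u) :
    ∀ x ∈ Ω, ∀ i j k : Fin n,
      D.covP2 (fun a b y => D.sff u a b y) k i j x =
        D.covG2 u (fun a b y => D.sff u a b y) k i j x +
          D.Wf u x / D.γ x * D.sff u i k x *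
            (∑ l, (∑ m, D.gInv u x l m * D.sff u j m x) * pd u l x) +
          D.Wf u x / D.γ x * D.sff u j k x *
            (∑ l, (∑ m, D.gInv u x l m * D.sff u i m x) * pd u l x) +
          pd u i x * pd u k x / (2 * (D.γ x) ^ 2) *
            (∑ l, D.sff u j l x * D.gradUp D.γ l x) +
          pd u j x * pd u k x / (2 * (D.γ x) ^ 2) *
            (∑ l, D.sff u i l x * D.gradUp D.γ l x) :=
  fun _ _ => covariant_derivative_of_pullback_second_fundamental_form_general D
    (contDiff_infty.mp hu 3).contDiffAt

end KMCF
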